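/- Let α > 0 and β = 2^α − 1. There exists a constant C > 0 such that for every sequence (a_n) of complex numbers with Σ_{n=1}^∞ |a_n|²/d(n)^α < ∞, the analytic function f(s) = Σ_{n=1}^∞ a_n n^{−s} on ℂ_{1/2} satisfies ∫_{Re s > 1/2} |f(s)|² (Re s − 1/2)^{β−1} |s + 1/2|^{−2β−2} dA(s) ≤ C · Σ_{n=1}^∞ |a_n|²/d(n)^α, where dA is planar Lebesgue measure. -/

import Mathlib

open Complex Filter MeasureTheory Finset

noncomputable section

/-- `numDiv n` is the number of divisors `d(n)` of `n`. -/
def numDiv (n : ℕ) : ℕ := n.divisors.card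

/-- the weight `d(n)^α` -/
def wt (α : ℝ) (n : ℕ) : ℝ := (numDiv n : ℝ) ^ α

lemma wt_nonneg (α : ℝ) (n : ℕ) : 0 ≤ wt α n := by unfold wt; positivity

lemma numDiv_pos {n : ℕ} (hn : n ≠ 0) : 0 < numDiv n := by
  unfold numDiv
  exact Finset.card_pos.mpr (Nat.nonempty_divisors.mpr hn)

lemma wt_pos (α : ℝ) {n : ℕ} (hn : n ≠ 0) : 0 < wt α n := by
  have := numDiv_pos hn
  unfold wt; positivity

lemma wt_zero {α : ℝ} (hα : 0 < α) : wt α 0 = 0 := by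
  simp [wt, numDiv, Real.zero_rpow hα.ne']

lemma wt_one (α : ℝ) : wt α 1 = 1 := by simp [wt, numDiv]

lemma wt_mul_coprime (α : ℝ) {m n : ℕ} (h : m.Coprime n) : wt α (m * n) = wt α m * wt α n := by
  unfold wt numDiv
  rw [h.card_divisors_mul, Nat.cast_mul, Real.mul_rpow (by positivity) (by positivity)]

lemma wt_mul_le {α : ℝ} (hα : 0 < α) (m n : ℕ) : wt α (m * n) ≤ wt α m * wt α n := by
  unfold wt numDiv
  rw [← Real.mul_rpow (by positivity) (by positivity)]
  refine Real.rpow_le_rpow (by positivity) ?_ hα.le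
  rw [Nat.divisors_mul]
  exact_mod_cast Finset.card_mul_le

lemma wt_prime_pow (α : ℝ) {p : ℕ} (hp : p.Prime) (k : ℕ) :
    wt α (p ^ k) = ((k : ℝ) + 1) ^ α := by
  unfold wt numDiv
  rw [Nat.divisors_prime_pow hp]; simp

lemma euler_factor_summable (α : ℝ) (c : ℝ) (hc : 0 < c) {x : ℝ} (hx0 : 0 ≤ x) (hx : x ≤ 1/2) :
    Summable (fun k : ℕ => ((k : ℝ) + c) ^ α * x ^ k) := by
  have h1 : (fun k : ℕ => ((k : ℝ) + c) ^ α * x ^ k) =O[atTop] fun k : ℕ => ((2/3:ℝ)) ^ k := by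
    have h2 := isLittleO_pow_const_mul_const_pow_const_pow_of_norm_lt (R := ℝ)
      (⌈|α|⌉₊) (r₁ := 1/2) (r₂ := 2/3) (by norm_num)
    refine Asymptotics.IsBigO.trans ?_ h2.isBigO
    obtain ⟨K, hK⟩ := exists_nat_ge (1 + c)
    refine Asymptotics.IsBigO.of_bound ((1 + c) ^ (⌈|α|⌉₊)) ?_
    filter_upwards [eventually_ge_atTop (1 + ⌈c⁻¹⌉₊)] with k hk
    have hk1 : (1:ℝ) ≤ k := by exact_mod_cast (by omega : 1 ≤ k)
    have hkc : 1 ≤ (k:ℝ) + c := by linarith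
    rw [Real.norm_of_nonneg (by positivity), Real.norm_of_nonneg (by positivity)]
    calc ((k : ℝ) + c) ^ α * x ^ k ≤ ((k : ℝ) + c) ^ ((⌈|α|⌉₊ : ℕ) : ℝ) * (1/2) ^ k := by
          gcongr
          exact (le_abs_self α).trans (Nat.le_ceil _)
      _ = ((k : ℝ) + c) ^ (⌈|α|⌉₊) * (1/2) ^ k := by rw [Real.rpow_natCast]
      _ ≤ ((1 + c) * k) ^ (⌈|α|⌉₊) * (1/2) ^ k := by
          gcongr
          nlinarith
      _ = _ := by rw [mul_pow]; ring
  exact summable_of_isBigO_nat (summable_geometric_of_lt_one (by norm_num) (by norm_num)) h1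

lemma euler_factor (α : ℝ) : ∃ K : ℝ, 0 ≤ K ∧ ∀ x : ℝ, 0 ≤ x → x ≤ 1/2 →
    ∑' k : ℕ, ((k : ℝ) + 1) ^ α * x ^ k ≤ Real.exp ((2:ℝ) ^ α * x + K * x ^ 2) := by
  refine ⟨∑' k : ℕ, ((k : ℝ) + 3) ^ α * (1/2) ^ k, tsum_nonneg fun k => by positivity, ?_⟩
  intro x hx0 hx
  have hs := euler_factor_summable α 1 one_pos hx0 hx
  have hs3 := euler_factor_summable α 3 (by norm_num) hx0 hx
  have hs3' := euler_factor_summable α 3 (by norm_num) (x := 1/2) (by norm_num) le_rfl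
  rw [← hs.sum_add_tsum_nat_add 2]
  have e : ∀ k : ℕ, (((k + 2 : ℕ) : ℝ) + 1) ^ α * x ^ (k + 2) =
      x ^ 2 * (((k : ℝ) + 3) ^ α * x ^ k) := by
    intro k
    rw [pow_add, show (((k + 2 : ℕ) : ℝ) + 1) = (k:ℝ) + 3 by push_cast; ring]; ring
  simp_rw [e]
  rw [tsum_mul_left]
  have h4 : ∑' k : ℕ, ((k : ℝ) + 3) ^ α * x ^ k ≤ ∑' k : ℕ, ((k : ℝ) + 3) ^ α * (1/2) ^ k :=
    hs3.tsum_le_tsum (fun k => by gcongr) hs3'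
  have h5 := Real.add_one_le_exp ((2:ℝ) ^ α * x + (∑' k : ℕ, ((k : ℝ) + 3) ^ α * (1/2) ^ k) * x ^ 2)
  refine le_trans ?_ h5
  have := mul_le_mul_of_nonneg_left h4 (sq_nonneg x)
  have e2 : ∑ i ∈ Finset.range 2, ((i : ℝ) + 1) ^ α * x ^ i = 1 + (2:ℝ) ^ α * x := by
    simp [Finset.sum_range_succ]
    norm_num
  rw [e2]
  linarith

lemma zeta_partial {s : ℝ} (hs : 1 < s) (N : ℕ) :
    ∑ n ∈ Finset.range N, ((n : ℝ) + 1) ^ (-s) ≤ 1 + 1 / (s - 1) := by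
  have hs' : 0 < s - 1 := by linarith
  suffices h : ∀ N : ℕ, ∑ n ∈ Finset.range (N + 1), ((n : ℝ) + 1) ^ (-s) ≤
      1 + (1 - ((N : ℝ) + 1) ^ (1 - s)) / (s - 1) by
    rcases N with _ | N
    · simp; positivity
    · refine (h N).trans ?_
      gcongr
      have : 0 ≤ ((N : ℝ) + 1) ^ (1 - s) := by positivity
      linarith
  intro N
  induction N with
  | zero => simp
  | succ n ih =>
    rw [Finset.sum_range_succ]
    push_cast
    have hn : (0:ℝ) < (n:ℝ) + 1 := by positivity
    have key : ((n:ℝ) + 1 + 1) ^ (-s) ≤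
        (((n : ℝ) + 1) ^ (1 - s) - ((n : ℝ) + 1 + 1) ^ (1 - s)) / (s - 1) := by
      rw [le_div_iff₀ hs']
      have e1 : ((n:ℝ) + 1 + 1) ^ (-s) = ((n:ℝ) + 1 + 1) ^ (1 - s) * (1 / ((n:ℝ) + 1 + 1)) := by
        rw [show (-s) = (1 - s) - 1 by ring, Real.rpow_sub_one (by positivity)]; ring
      have e2 : ((n:ℝ) + 1) ^ (1 - s) = ((n:ℝ) + 1 + 1) ^ (1 - s) *
          (((n:ℝ) + 1) / ((n:ℝ) + 1 + 1)) ^ (1 - s) := by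
        rw [Real.div_rpow (by positivity) (by positivity)]
        field_simp
      have e3 : 1 + (s - 1) * (1 / ((n:ℝ) + 1 + 1)) ≤ (((n:ℝ) + 1) / ((n:ℝ) + 1 + 1)) ^ (1 - s) := by
        rw [Real.rpow_def_of_pos (by positivity)]
        have h1 : Real.log (((n:ℝ) + 1) / ((n:ℝ) + 1 + 1)) ≤ - (1 / ((n:ℝ) + 1 + 1)) := by
          refine (Real.log_le_sub_one_of_pos (by positivity)).trans (le_of_eq ?_)
          field_simp; ring
        refine le_trans ?_ (Real.add_one_le_exp _)
        nlinarith
      have h0 : 0 ≤ ((n:ℝ) + 1 + 1) ^ (1 - s) := by positivity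
      rw [e1, e2]
      nlinarith [mul_le_mul_of_nonneg_left e3 h0]
    have : (1 - ((n : ℝ) + 1 + 1) ^ (1 - s)) / (s - 1) = (1 - ((n : ℝ) + 1) ^ (1 - s)) / (s - 1) +
      (((n : ℝ) + 1) ^ (1 - s) - ((n : ℝ) + 1 + 1) ^ (1 - s)) / (s - 1) := by ring
    rw [this]
    linarith

lemma zeta_tsum {s : ℝ} (hs : 1 < s) :
    ∑' n : ℕ, (n : ℝ) ^ (-s) ≤ 1 + 1 / (s - 1) := by
  have hsum : Summable (fun n : ℕ => (n : ℝ) ^ (-s)) := Real.summable_nat_rpow.mpr (by linarith)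
  rw [hsum.tsum_eq_zero_add]
  have : ((0:ℕ):ℝ) ^ (-s) = 0 := by rw [Nat.cast_zero, Real.zero_rpow (by linarith)]
  rw [this, zero_add]
  refine ((summable_nat_add_iff 1).mpr hsum).tsum_le_of_sum_range_le ?_
  intro N
  simpa using zeta_partial hs N

lemma prime_rpow_le_half {s : ℝ} (hs : 1 < s) {p : ℕ} (hp : p.Prime) : (p:ℝ) ^ (-s) ≤ 1/2 := by
  have h2 : (2:ℝ) ≤ p := by exact_mod_cast hp.two_le
  calc (p:ℝ) ^ (-s) ≤ (p:ℝ) ^ (-1:ℝ) := Real.rpow_le_rpow_of_exponent_le (by linarith) (by linarith)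
    _ = 1 / p := by rw [Real.rpow_neg_one]; simp
    _ ≤ 1/2 := by gcongr

lemma exp_sum_primes {s : ℝ} (hs : 1 < s) (N : ℕ) :
    Real.exp (∑ p ∈ N.primesBelow, (p:ℝ) ^ (-s)) ≤ 1 + 1 / (s - 1) := by
  have hsum : Summable (fun n : ℕ => (n : ℝ) ^ (-s)) := Real.summable_nat_rpow.mpr (by linarith)
  have h := EulerProduct.prod_primesBelow_tsum_eq_tsum_smoothNumbers (R := ℝ)
    (f := fun n : ℕ => (n:ℝ) ^ (-s)) (by simp)
    (by intro m n _; push_cast; rw [Real.mul_rpow (by positivity) (by positivity)]) hsum.norm N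
  have h2 : ∑' m : N.smoothNumbers, ((m:ℕ):ℝ) ^ (-s) ≤ ∑' n : ℕ, (n : ℝ) ^ (-s) :=
    hsum.tsum_subtype_le _ _ (fun n => by positivity)
  refine le_trans ?_ (h2.trans (zeta_tsum hs))
  rw [← h, Real.exp_sum]
  refine Finset.prod_le_prod (fun i _ => (Real.exp_pos _).le) ?_
  intro p hp
  have hp' := Nat.prime_of_mem_primesBelow hp
  have hle := prime_rpow_le_half hs hp'
  have h0 : (0:ℝ) ≤ (p:ℝ) ^ (-s) := by positivity
  have e : ∀ n : ℕ, ((p ^ n : ℕ) : ℝ) ^ (-s) = ((p:ℝ) ^ (-s)) ^ n := by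
    intro n
    rw [Nat.cast_pow, ← Real.rpow_natCast, ← Real.rpow_natCast, ← Real.rpow_mul (by positivity),
      ← Real.rpow_mul (by positivity), mul_comm]
  simp_rw [e]
  rw [tsum_geometric_of_lt_one h0 (by linarith)]
  rw [le_inv_comm₀ (Real.exp_pos _) (by linarith), ← Real.exp_neg]
  have := Real.add_one_le_exp (-((p:ℝ) ^ (-s)))
  linarith

lemma dirichlet_bound {α : ℝ} : ∃ K : ℝ, 0 < K ∧ ∀ s : ℝ, 1 < s → ∀ N : ℕ,
    ∑ n ∈ Ioc 0 N, wt α n * (n:ℝ) ^ (-s) ≤ K * (1 + 1 / (s - 1)) ^ ((2:ℝ) ^ α) := by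
  obtain ⟨K, hK0, hK⟩ := euler_factor α
  refine ⟨Real.exp (K * ∑' n : ℕ, (n:ℝ) ^ (-2:ℝ)), Real.exp_pos _, ?_⟩
  intro s hs N
  have hsum2 : Summable (fun n : ℕ => (n : ℝ) ^ (-2:ℝ)) :=
    Real.summable_nat_rpow.mpr (by norm_num)
  have e : ∀ p : ℕ, p.Prime → ∀ n : ℕ, wt α (p ^ n) * ((p ^ n : ℕ) : ℝ) ^ (-s) =
      ((n:ℝ) + 1) ^ α * ((p:ℝ) ^ (-s)) ^ n := by
    intro p hp n
    rw [wt_prime_pow α hp, Nat.cast_pow, ← Real.rpow_natCast, ← Real.rpow_natCast,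
      ← Real.rpow_mul (by positivity), ← Real.rpow_mul (by positivity), mul_comm (n:ℝ) (-s)]
  have h := EulerProduct.summable_and_hasSum_smoothNumbers_prod_primesBelow_tsum (R := ℝ)
    (f := fun n : ℕ => wt α n * (n:ℝ) ^ (-s)) (by simp [wt_one])
    (by
      intro m n hmn; push_cast
      rw [Real.mul_rpow (by positivity) (by positivity), wt_mul_coprime α hmn]; ring)
    (by
      intro p hp
      simp_rw [e p hp]
      exact (euler_factor_summable α 1 one_pos (by positivity) (prime_rpow_le_half hs hp)).norm)
    (N + 1)
  obtain ⟨hsm, hhs⟩ := h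
  have hpos : ∀ n : ℕ, 0 ≤ wt α n * (n:ℝ) ^ (-s) := fun n =>
    mul_nonneg (wt_nonneg _ _) (by positivity)
  have h1 : ∑ n ∈ Ioc 0 N, wt α n * (n:ℝ) ^ (-s) ≤
      ∏ p ∈ (N + 1).primesBelow, ∑' n : ℕ, wt α (p ^ n) * ((p ^ n : ℕ) : ℝ) ^ (-s) := by
    have hmem : ∀ n ∈ Ioc 0 N, n ∈ (N + 1).smoothNumbers := by
      intro n hn
      rw [Finset.mem_Ioc] at hn
      exact Nat.mem_smoothNumbers_of_lt hn.1 (by omega)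
    have := sum_le_hasSum ((Ioc 0 N).subtype (· ∈ (N + 1).smoothNumbers)) (fun i _ => hpos i) hhs
    rwa [Finset.sum_subtype_of_mem (fun n : ℕ => wt α n * (n:ℝ) ^ (-s)) hmem] at this
  refine h1.trans ?_
  have h2 : ∀ p ∈ (N + 1).primesBelow, ∑' n : ℕ, wt α (p ^ n) * ((p ^ n : ℕ) : ℝ) ^ (-s) ≤
      Real.exp ((2:ℝ) ^ α * (p:ℝ) ^ (-s)) * Real.exp (K * (p:ℝ) ^ (-2:ℝ)) := by
    intro p hp
    have hp' := Nat.prime_of_mem_primesBelow hp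
    have h2 : (2:ℝ) ≤ p := by exact_mod_cast hp'.two_le
    simp_rw [e p hp']
    refine (hK _ (by positivity) (prime_rpow_le_half hs hp')).trans ?_
    rw [← Real.exp_add]
    gcongr
    rw [← Real.rpow_natCast, ← Real.rpow_mul (by positivity)]
    exact Real.rpow_le_rpow_of_exponent_le (by linarith) (by push_cast; linarith)
  refine (Finset.prod_le_prod (fun p hp => tsum_nonneg fun n => hpos _) h2).trans ?_
  rw [Finset.prod_mul_distrib, mul_comm]
  have h01 : 0 < 1 + 1 / (s - 1) := by
    have : 0 < s - 1 := by linarith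
    positivity
  gcongr
  · rw [← Real.exp_sum, ← Finset.mul_sum]
    gcongr
    exact hsum2.sum_le_tsum _ (fun i _ => by positivity)
  · rw [← Real.exp_sum, ← Finset.mul_sum, mul_comm, Real.exp_mul]
    gcongr
    exact exp_sum_primes hs _

lemma log_rpow_le {γ : ℝ} (hγ : 0 < γ) (c : ℝ) (hc : 0 ≤ c) {ε : ℝ} (hε : 0 < ε) : ∃ K : ℝ, 0 < K ∧
    ∀ x : ℝ, 1 ≤ x → (1 + c * Real.log x) ^ γ ≤ K * x ^ ε := by
  refine ⟨(1 + c / (ε / γ)) ^ γ, by positivity, ?_⟩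
  intro x hx
  have hl : 0 ≤ Real.log x := Real.log_nonneg hx
  have h1 := Real.log_le_rpow_div (x := x) (by linarith) (div_pos hε hγ)
  have h2 : 1 ≤ x ^ (ε / γ) := Real.one_le_rpow hx (by positivity)
  have h3 : 1 + c * Real.log x ≤ (1 + c / (ε / γ)) * x ^ (ε / γ) := by
    have := mul_le_mul_of_nonneg_left h1 hc
    have e : c * (x ^ (ε / γ) / (ε / γ)) = c / (ε / γ) * x ^ (ε / γ) := by ring
    rw [e] at this
    linarith
  calc (1 + c * Real.log x) ^ γ ≤ ((1 + c / (ε / γ)) * x ^ (ε / γ)) ^ γ := by gcongr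
    _ = _ := by
      rw [Real.mul_rpow (by positivity) (by positivity), ← Real.rpow_mul (by positivity)]
      congr 2; field_simp

lemma cheb_bound {α : ℝ} (hα : 0 < α) : ∃ K : ℝ, 0 < K ∧ ∀ N : ℕ,
    ∑ q ∈ Ioc 0 N, ArithmeticFunction.vonMangoldt q * wt α q ≤ K * N := by
  obtain ⟨C, hC⟩ := Chebyshev.psi_sub_theta_le_mul_sqrt
  obtain ⟨L, hL0, hL⟩ := log_rpow_le hα (1 / Real.log 2)
    (by have := Real.log_pos (one_lt_two); positivity) (ε := 1/2) (by norm_num)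
  refine ⟨(2:ℝ) ^ α * Real.log 4 + L * |C|, ?_, ?_⟩
  · have : 0 < Real.log 4 := Real.log_pos (by norm_num)
    positivity
  intro N
  rcases Nat.eq_zero_or_pos N with rfl | hN
  · simp
  have hN1 : (1:ℝ) ≤ N := by exact_mod_cast hN
  rw [← Finset.sum_filter_add_sum_filter_not (Ioc 0 N) Nat.Prime]
  have h1 : ∑ q ∈ Ioc 0 N with q.Prime, ArithmeticFunction.vonMangoldt q * wt α q ≤
      (2:ℝ) ^ α * Real.log 4 * N := by
    have : ∑ q ∈ Ioc 0 N with q.Prime, ArithmeticFunction.vonMangoldt q * wt α q =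
        (2:ℝ) ^ α * Chebyshev.theta N := by
      rw [Chebyshev.theta, Nat.floor_natCast, Finset.mul_sum]
      refine Finset.sum_congr rfl fun q hq => ?_
      have hp := (Finset.mem_filter.mp hq).2
      rw [ArithmeticFunction.vonMangoldt_apply_prime hp]
      have := wt_prime_pow α hp 1
      rw [pow_one] at this
      rw [this]; norm_num; ring
    rw [this, mul_assoc]
    gcongr
    exact Chebyshev.theta_le_log4_mul_x (by positivity)
  have h2 : ∑ q ∈ Ioc 0 N with ¬ q.Prime, ArithmeticFunction.vonMangoldt q * wt α q ≤
      L * |C| * N := by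
    have hb : ∀ q ∈ (Ioc 0 N).filter (fun q => ¬ q.Prime),
        ArithmeticFunction.vonMangoldt q * wt α q ≤
        ArithmeticFunction.vonMangoldt q * (L * (N:ℝ) ^ (1/2:ℝ)) := by
      intro q hq
      by_cases hpp : IsPrimePow q
      · refine mul_le_mul_of_nonneg_left ?_ ArithmeticFunction.vonMangoldt_nonneg
        obtain ⟨p, k, hp, hk, rfl⟩ := (isPrimePow_nat_iff q).mp hpp
        rw [wt_prime_pow α hp]
        refine le_trans ?_ (hL N hN1)
        have hle : p ^ k ≤ N := (Finset.mem_Ioc.mp (Finset.mem_filter.mp hq).1).2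
        have : (2:ℝ) ^ k ≤ N := by
          calc (2:ℝ) ^ k ≤ (p:ℝ) ^ k := by gcongr; exact_mod_cast hp.two_le
            _ ≤ N := by exact_mod_cast hle
        have hlog := Real.log_le_log (by positivity) this
        rw [Real.log_pow] at hlog
        have hl2 : 0 < Real.log 2 := Real.log_pos (one_lt_two)
        have : (k:ℝ) ≤ 1 / Real.log 2 * Real.log N := by
          rw [one_div, ← div_eq_inv_mul, le_div_iff₀ hl2]; exact hlog
        refine Real.rpow_le_rpow (by positivity) (by linarith) hα.le
      · rw [ArithmeticFunction.vonMangoldt_eq_zero_iff.mpr hpp]; simp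
    refine (Finset.sum_le_sum hb).trans ?_
    rw [← Finset.sum_mul]
    have := hC N
    rw [Chebyshev.psi_sub_theta_eq_sum_not_prime, Nat.floor_natCast, Real.sqrt_eq_rpow] at this
    calc _ ≤ (|C| * (N:ℝ) ^ (1/2:ℝ)) * (L * (N:ℝ) ^ (1/2:ℝ)) := by
          gcongr
          refine this.trans ?_
          gcongr
          exact le_abs_self C
      _ = L * |C| * ((N:ℝ) ^ (1/2:ℝ) * (N:ℝ) ^ (1/2:ℝ)) := by ring
      _ = _ := by rw [← Real.rpow_add (by linarith)]; norm_num
  linarith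

lemma sum_log_bound {α : ℝ} (hα : 0 < α) : ∃ K : ℝ, 0 < K ∧ ∀ N : ℕ,
    ∑ n ∈ Ioc 0 N, wt α n * Real.log n ≤ K * N * ∑ n ∈ Ioc 0 N, wt α n / n := by
  obtain ⟨K, hK0, hK⟩ := cheb_bound hα
  refine ⟨K, hK0, fun N => ?_⟩
  let F : ArithmeticFunction ℝ := ⟨wt α, wt_zero hα⟩
  let G : ArithmeticFunction ℝ := ⟨fun q => ArithmeticFunction.vonMangoldt q * wt α q, by simp⟩
  have h := ArithmeticFunction.sum_Ioc_mul_eq_sum_sum F G N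
  have h1 : ∑ n ∈ Ioc 0 N, wt α n * Real.log n ≤ ∑ n ∈ Ioc 0 N, (F * G) n := by
    refine Finset.sum_le_sum fun n hn => ?_
    rw [ArithmeticFunction.mul_apply, ← ArithmeticFunction.vonMangoldt_sum, Finset.mul_sum,
      ← Nat.sum_divisorsAntidiagonal' (f := fun _ y => wt α n * ArithmeticFunction.vonMangoldt y)]
    refine Finset.sum_le_sum fun x hx => ?_
    obtain ⟨hx1, hx2⟩ := Nat.mem_divisorsAntidiagonal.mp hx
    change _ ≤ wt α x.1 * (ArithmeticFunction.vonMangoldt x.2 * wt α x.2)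
    rw [← hx1]
    have := mul_le_mul_of_nonneg_right (wt_mul_le hα x.1 x.2)
      (ArithmeticFunction.vonMangoldt_nonneg (n := x.2))
    linarith
  refine h1.trans ?_
  rw [h, Finset.mul_sum]
  refine Finset.sum_le_sum fun n hn => ?_
  change wt α n * ∑ m ∈ Ioc 0 (N / n), ArithmeticFunction.vonMangoldt m * wt α m ≤ _
  have h2 : ∑ m ∈ Ioc 0 (N / n), ArithmeticFunction.vonMangoldt m * wt α m ≤ K * (N / n : ℝ) := by
    refine (hK _).trans ?_
    gcongr
    exact Nat.cast_div_le
  calc _ ≤ wt α n * (K * (N / n : ℝ)) := mul_le_mul_of_nonneg_left h2 (wt_nonneg _ _)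
    _ = _ := by ring

lemma sum_wt_bound {α : ℝ} (hα : 0 < α) : ∃ K : ℝ, 0 < K ∧ ∀ N : ℕ, 0 < N →
    ∑ n ∈ Ioc 0 N, wt α n ≤ K * N * (1 + Real.log N) ^ ((2:ℝ) ^ α - 1) := by
  obtain ⟨K, hK0, hK⟩ := sum_log_bound hα
  obtain ⟨D, hD0, hD⟩ := dirichlet_bound (α := α)
  refine ⟨(K + 2) * (Real.exp 1 * (D * 2 ^ ((2:ℝ) ^ α))), by positivity, fun N hN => ?_⟩
  have hN1 : (1:ℝ) ≤ N := by exact_mod_cast hN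
  have hl : 0 ≤ Real.log N := Real.log_nonneg hN1
  set L := 1 + Real.log N with hLdef
  have hL1 : 1 ≤ L := by linarith
  set H := ∑ n ∈ Ioc 0 N, wt α n / n with hH
  have hH1 : H ≤ Real.exp 1 * (D * 2 ^ ((2:ℝ) ^ α)) * L ^ ((2:ℝ) ^ α) := by
    have h1 := hD (1 + 1 / L) (by have : 0 < 1 / L := by positivity
                                  linarith) N
    have e : 1 + 1 / (1 + 1 / L - 1) = 1 + L := by
      rw [add_sub_cancel_left, one_div_one_div]
    rw [e] at h1
    have h2 : H ≤ Real.exp 1 * ∑ n ∈ Ioc 0 N, wt α n * (n:ℝ) ^ (-(1 + 1 / L)) := by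
      rw [hH, Finset.mul_sum]
      refine Finset.sum_le_sum fun n hn => ?_
      rw [Finset.mem_Ioc] at hn
      have hn1 : (1:ℝ) ≤ n := by exact_mod_cast hn.1
      have hnN : (n:ℝ) ≤ N := by exact_mod_cast hn.2
      have h3 : (n:ℝ) ^ (1 / L) ≤ Real.exp 1 := by
        rw [Real.rpow_def_of_pos (by linarith)]
        gcongr
        rw [mul_one_div, div_le_one (by linarith)]
        have := Real.log_le_log (by linarith) hnN
        linarith
      rw [neg_add, Real.rpow_add (by linarith), Real.rpow_neg_one, Real.rpow_neg (by linarith)]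
      have h4 : 1 ≤ Real.exp 1 * ((n:ℝ) ^ (1 / L))⁻¹ := by
        rw [← div_eq_mul_inv, one_le_div (by positivity)]; exact h3
      have h5 : 0 ≤ wt α n / n := div_nonneg (wt_nonneg _ _) (by positivity)
      calc wt α n / n = wt α n / n * 1 := by ring
        _ ≤ wt α n / n * (Real.exp 1 * ((n:ℝ) ^ (1 / L))⁻¹) := by gcongr
        _ = _ := by ring
    refine h2.trans ?_
    rw [mul_assoc]
    gcongr
    refine h1.trans ?_
    rw [mul_assoc, ← Real.mul_rpow (by norm_num) (by linarith)]
    gcongr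
    linarith
  have hS : (∑ n ∈ Ioc 0 N, wt α n) * L ≤ (K + 2) * N * H := by
    have h1 : (∑ n ∈ Ioc 0 N, wt α n) * L ≤ ∑ n ∈ Ioc 0 N, wt α n * Real.log n +
        2 * N * H := by
      rw [hH, Finset.mul_sum, Finset.sum_mul, ← Finset.sum_add_distrib]
      refine Finset.sum_le_sum fun n hn => ?_
      rw [Finset.mem_Ioc] at hn
      have hn1 : (1:ℝ) ≤ n := by exact_mod_cast hn.1
      have hnN : (n:ℝ) ≤ N := by exact_mod_cast hn.2
      have h6 : L ≤ Real.log n + 2 * (N / n) := by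
        have h7 := Real.log_le_sub_one_of_pos (x := (N:ℝ) / n) (by positivity)
        rw [Real.log_div (by positivity) (by positivity)] at h7
        have : 1 ≤ (N:ℝ) / n := by rw [one_le_div (by linarith)]; exact hnN
        linarith
      calc wt α n * L ≤ wt α n * (Real.log n + 2 * (N / n)) :=
            mul_le_mul_of_nonneg_left h6 (wt_nonneg _ _)
        _ = _ := by ring
    have := hK N
    rw [← hH] at this
    linarith
  rw [Real.rpow_sub_one (by linarith), ← mul_div_assoc, le_div_iff₀ (by linarith)]
  refine hS.trans ?_
  calc (K + 2) * N * H ≤ (K + 2) * N *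
      (Real.exp 1 * (D * 2 ^ ((2:ℝ) ^ α)) * L ^ ((2:ℝ) ^ α)) := by gcongr
    _ = _ := by ring

/-- Gaussian kernel in the logarithms -/
def gker (m n : ℕ) : ℝ := Real.exp (-(Real.log m - Real.log n) ^ 2)

lemma gker_nonneg (m n : ℕ) : 0 ≤ gker m n := (Real.exp_pos _).le

lemma gker_comm (m n : ℕ) : gker m n = gker n m := by
  unfold gker; congr 2; ring

lemma gker_le_one (m n : ℕ) : gker m n ≤ 1 := by
  unfold gker
  rw [Real.exp_le_one_iff]
  nlinarith [sq_nonneg (Real.log m - Real.log n)]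

lemma gker_le {m n M : ℕ} (hm : 0 < m) (hn : 0 < n) (hM : m ≤ M) :
    gker m n ≤ ∑ j ∈ Finset.range (M + 1),
      4 * Real.exp 1 * (1/4:ℝ) ^ j * (if m ≤ n * 2 ^ j then 1 else 0) := by
  have hM2 : M < 2 ^ M := Nat.lt_two_pow_self
  have hex : ∃ j, m ≤ n * 2 ^ j := ⟨M, by nlinarith⟩
  classical
  set j := Nat.find hex with hj
  have hj1 : m ≤ n * 2 ^ j := Nat.find_spec hex
  have hjM : j ≤ M := Nat.find_min' hex (by nlinarith)
  have h1 : gker m n ≤ 4 * Real.exp 1 * (1/4:ℝ) ^ j := by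
    rcases Nat.eq_zero_or_pos j with h0 | h0
    · rw [h0]
      have := Real.add_one_le_exp 1
      have := gker_le_one m n
      simp; linarith
    · obtain ⟨i, hi⟩ : ∃ i, j = i + 1 := ⟨j - 1, by omega⟩
      have h2 : ¬ (m ≤ n * 2 ^ i) := Nat.find_min hex (by omega)
      have h3 : (n:ℝ) * 2 ^ i ≤ m := by
        have : n * 2 ^ i ≤ m := by omega
        exact_mod_cast this
      have hm' : (0:ℝ) < m := by exact_mod_cast hm
      have hn' : (0:ℝ) < n := by exact_mod_cast hn
      have h4 : gker m n ≤ Real.exp 1 * ((n:ℝ) / m) ^ 2 := by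
        have : ((n:ℝ) / m) ^ 2 = Real.exp (- 2 * (Real.log m - Real.log n)) := by
          rw [← Real.log_div (by positivity) (by positivity), mul_comm, Real.exp_mul,
            Real.exp_log (by positivity)]
          rw [Real.rpow_neg (by positivity)]
          norm_num
          rw [← inv_pow, inv_div]
        rw [this, ← Real.exp_add]
        unfold gker
        gcongr
        nlinarith [sq_nonneg (Real.log m - Real.log n - 1)]
      refine h4.trans ?_
      have h5 : (n:ℝ) / m ≤ (1/2) ^ i := by
        rw [div_le_iff₀ hm', one_div, inv_pow, inv_mul_eq_div, le_div_iff₀ (by positivity)]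
        exact h3
      calc Real.exp 1 * ((n:ℝ) / m) ^ 2 ≤ Real.exp 1 * ((1/2) ^ i) ^ 2 := by gcongr
        _ = 4 * Real.exp 1 * (1/4:ℝ) ^ j := by
          rw [hi, ← pow_mul, mul_comm i 2, pow_mul, pow_succ]; norm_num; ring
  refine h1.trans ?_
  have := Finset.single_le_sum (s := Finset.range (M + 1))
    (f := fun j => 4 * Real.exp 1 * (1/4:ℝ) ^ j * (if m ≤ n * 2 ^ j then (1:ℝ) else 0))
    (fun i _ => by positivity) (Finset.mem_range.mpr (by omega : j < M + 1))
  simpa [hj1] using this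

lemma kernel_sum {α : ℝ} (hα : 0 < α) : ∃ K : ℝ, 0 < K ∧ ∀ n : ℕ, 0 < n → ∀ M : ℕ,
    ∑ m ∈ Ioc 0 M, wt α m * gker m n ≤ K * n * (1 + Real.log n) ^ ((2:ℝ) ^ α - 1) := by
  obtain ⟨K, hK0, hK⟩ := sum_wt_bound hα
  set β := (2:ℝ) ^ α - 1 with hβ
  have hβ0 : 0 < β := by
    have := Real.one_lt_rpow (one_lt_two) hα
    linarith
  have hsum := euler_factor_summable β 1 one_pos (x := 1/2) (by norm_num) le_rfl
  set T := ∑' k : ℕ, ((k : ℝ) + 1) ^ β * (1/2) ^ k with hT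
  have hT0 : 0 < T := hsum.tsum_pos (fun k => by positivity) 0 (by simp)
  refine ⟨4 * Real.exp 1 * K * T, by positivity, ?_⟩
  intro n hn M
  have hn1 : (1:ℝ) ≤ n := by exact_mod_cast hn
  have hl : 0 ≤ Real.log n := Real.log_nonneg hn1
  calc ∑ m ∈ Ioc 0 M, wt α m * gker m n
      ≤ ∑ m ∈ Ioc 0 M, wt α m * ∑ j ∈ Finset.range (M + 1),
      4 * Real.exp 1 * (1/4:ℝ) ^ j * (if m ≤ n * 2 ^ j then 1 else 0) := by
        refine Finset.sum_le_sum fun m hm => mul_le_mul_of_nonneg_left ?_ (wt_nonneg _ _)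
        rw [Finset.mem_Ioc] at hm
        exact gker_le hm.1 hn hm.2
    _ = ∑ j ∈ Finset.range (M + 1), 4 * Real.exp 1 * (1/4:ℝ) ^ j *
        ∑ m ∈ Ioc 0 M, (if m ≤ n * 2 ^ j then wt α m else 0) := by
        simp_rw [Finset.mul_sum]
        rw [Finset.sum_comm]
        refine Finset.sum_congr rfl fun j _ => Finset.sum_congr rfl fun m _ => ?_
        split_ifs <;> ring
    _ ≤ ∑ j ∈ Finset.range (M + 1), 4 * Real.exp 1 * (1/4:ℝ) ^ j *
        (K * (n * 2 ^ j) * ((1 + Real.log n) * (j + 1)) ^ β) := by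
        refine Finset.sum_le_sum fun j _ => mul_le_mul_of_nonneg_left ?_ (by positivity)
        rw [← Finset.sum_filter]
        calc _ ≤ ∑ m ∈ Ioc 0 (n * 2 ^ j), wt α m := by
              refine Finset.sum_le_sum_of_subset_of_nonneg ?_ (fun _ _ _ => wt_nonneg _ _)
              intro m hm
              simp only [Finset.mem_filter, Finset.mem_Ioc] at hm ⊢
              exact ⟨hm.1.1, hm.2⟩
          _ ≤ K * (n * 2 ^ j : ℕ) * (1 + Real.log (n * 2 ^ j : ℕ)) ^ β := hK _ (by positivity)
          _ ≤ _ := by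
              push_cast
              have hl2 : Real.log 2 ≤ 1 := by
                have := Real.log_le_sub_one_of_pos (x := 2) (by norm_num); linarith
              have hl20 : 0 ≤ Real.log 2 := Real.log_nonneg (by norm_num)
              rw [Real.log_mul (by positivity) (by positivity), Real.log_pow]
              have hj : (0:ℝ) ≤ j := by positivity
              have h1 : (j:ℝ) * Real.log 2 ≤ j := by nlinarith
              gcongr
              nlinarith
    _ = 4 * Real.exp 1 * K * (n * (1 + Real.log n) ^ β) *
        ∑ j ∈ Finset.range (M + 1), ((j : ℝ) + 1) ^ β * (1/2) ^ j := by
        rw [Finset.mul_sum]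
        refine Finset.sum_congr rfl fun j _ => ?_
        rw [Real.mul_rpow (by linarith) (by positivity),
          show (1/4:ℝ) = (1/2) * (1/2) by norm_num, mul_pow]
        have : (1/2:ℝ) ^ j * 2 ^ j = 1 := by rw [← mul_pow]; norm_num
        linear_combination (4 * Real.exp 1 * K * (n * (1 + Real.log n) ^ β) *
          (((j : ℝ) + 1) ^ β * (1/2) ^ j)) * this
    _ ≤ 4 * Real.exp 1 * K * (n * (1 + Real.log n) ^ β) * T := by
        gcongr
        exact hsum.sum_le_tsum _ (fun i _ => by positivity)
    _ = _ := by ring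

lemma gauss_term (k Δ : ℝ) :
    Integrable (fun t : ℝ => cexp (-I * t * Δ) * (Real.exp (-(t - k) ^ 2 / 4) : ℂ)) ∧
    ‖∫ t : ℝ, cexp (-I * t * Δ) * (Real.exp (-(t - k) ^ 2 / 4) : ℂ)‖ =
      ‖((Real.pi : ℂ) / -(-1/4 : ℂ)) ^ (1 / 2 : ℂ)‖ * Real.exp (-Δ ^ 2) := by
  have e : (fun t : ℝ => cexp (-I * t * Δ) * (Real.exp (-(t - k) ^ 2 / 4) : ℂ)) =
      fun t : ℝ => cexp ((-1/4 : ℂ) * t ^ 2 + (k / 2 - I * Δ) * t + (-k ^ 2 / 4 : ℂ)) := by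
    funext t
    rw [Complex.ofReal_exp, ← Complex.exp_add]
    congr 1
    push_cast
    ring
  have hb : (-1/4 : ℂ).re < 0 := by norm_num
  rw [e]
  refine ⟨integrable_cexp_quadratic' hb _ _, ?_⟩
  rw [integral_cexp_quadratic hb, norm_mul, Complex.norm_exp]
  congr 2
  have : (-k ^ 2 / 4 : ℂ) - (k / 2 - I * Δ) ^ 2 / (4 * (-1/4 : ℂ)) =
      ((-Δ ^ 2 : ℝ) : ℂ) + ((- k * Δ : ℝ) : ℂ) * I := by
    push_cast
    ring_nf
    rw [Complex.I_sq]; ring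
  rw [this, Complex.add_re, Complex.ofReal_re, Complex.re_ofReal_mul]
  simp

lemma gauss_sum : ∃ G : ℝ, 0 < G ∧ ∀ (s : Finset ℕ) (b : ℕ → ℂ) (k : ℝ),
    ∫⁻ t : ℝ, ENNReal.ofReal (‖∑ n ∈ s, b n * cexp (-I * t * Real.log n)‖ ^ 2 *
      Real.exp (-(t - k) ^ 2 / 4)) ≤
    ENNReal.ofReal (G * ∑ n ∈ s, ∑ m ∈ s, ‖b n‖ * ‖b m‖ * gker n m) := by
  set G := ‖((Real.pi : ℂ) / -(-1/4 : ℂ)) ^ (1 / 2 : ℂ)‖ with hG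
  have hG0 : 0 < G := by
    rw [hG, norm_pos_iff]
    have : ((Real.pi : ℂ) / -(-1/4 : ℂ)) ≠ 0 := by
      have : (Real.pi : ℂ) ≠ 0 := by exact_mod_cast Real.pi_ne_zero
      refine div_ne_zero this (by norm_num)
    rw [Complex.cpow_def_of_ne_zero this]
    exact Complex.exp_ne_zero _
  refine ⟨G, hG0, fun s b k => ?_⟩
  set h : ℝ → ℝ := fun t => ‖∑ n ∈ s, b n * cexp (-I * t * Real.log n)‖ ^ 2 *
      Real.exp (-(t - k) ^ 2 / 4) with hh
  have e : ∀ t : ℝ, ((h t : ℝ) : ℂ) = ∑ n ∈ s, ∑ m ∈ s, b n * (starRingEnd ℂ) (b m) *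
      (cexp (-I * t * (Real.log n - Real.log m : ℝ)) * (Real.exp (-(t - k) ^ 2 / 4) : ℂ)) := by
    intro t
    simp only [hh]
    rw [Complex.ofReal_mul, Complex.ofReal_pow, ← Complex.mul_conj', map_sum, Finset.sum_mul_sum,
      Finset.sum_mul]
    refine Finset.sum_congr rfl fun n _ => ?_
    rw [Finset.sum_mul]
    refine Finset.sum_congr rfl fun m _ => ?_
    rw [map_mul, ← Complex.exp_conj]
    have : cexp (-I * t * (Real.log n - Real.log m : ℝ)) = cexp (-I * t * Real.log n) *
        cexp ((starRingEnd ℂ) (-I * t * Real.log m)) := by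
      rw [← Complex.exp_add]
      congr 1
      simp only [map_mul, map_neg, Complex.conj_I, Complex.conj_ofReal]
      push_cast; ring
    rw [this]; ring
  have hintg : Integrable (fun t => ((h t : ℝ) : ℂ)) := by
    simp_rw [e]
    exact integrable_finsetSum _ fun n _ => integrable_finsetSum _ fun m _ =>
      (gauss_term k _).1.const_mul _
  have hintg' : Integrable h := by simpa using hintg.re
  have hnn : ∀ t, 0 ≤ h t := fun t => by simp only [hh]; positivity
  rw [← ofReal_integral_eq_lintegral_ofReal hintg' (ae_of_all _ hnn)]
  refine ENNReal.ofReal_le_ofReal ?_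
  calc ∫ t, h t ≤ ‖∫ t, ((h t : ℝ) : ℂ)‖ := by
        rw [integral_complex_ofReal, Complex.norm_real]; exact le_abs_self _
    _ = ‖∑ n ∈ s, ∑ m ∈ s, b n * (starRingEnd ℂ) (b m) * ∫ t : ℝ,
      (cexp (-I * t * (Real.log n - Real.log m : ℝ)) * (Real.exp (-(t - k) ^ 2 / 4) : ℂ))‖ := by
        simp_rw [e]
        rw [integral_finsetSum _ (fun n _ => integrable_finsetSum _ fun m _ =>
          (gauss_term k _).1.const_mul _)]
        congr 1
        refine Finset.sum_congr rfl fun n _ => ?_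
        rw [integral_finsetSum _ (fun m _ => (gauss_term k _).1.const_mul _)]
        refine Finset.sum_congr rfl fun m _ => ?_
        rw [integral_const_mul]
    _ ≤ ∑ n ∈ s, ∑ m ∈ s, G * (‖b n‖ * ‖b m‖ * gker n m) := by
        refine (norm_sum_le _ _).trans (Finset.sum_le_sum fun n _ => ?_)
        refine (norm_sum_le _ _).trans (Finset.sum_le_sum fun m _ => ?_)
        rw [norm_mul, norm_mul, (gauss_term k _).2, RCLike.norm_conj, ← hG, gker]
        exact le_of_eq (by ring)
    _ = _ := by simp_rw [Finset.mul_sum]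

lemma schur {α : ℝ} (M : ℕ) (b : ℕ → ℝ) :
    ∑ n ∈ Ioc 0 M, ∑ m ∈ Ioc 0 M, b n * b m * gker n m ≤
    ∑ n ∈ Ioc 0 M, b n ^ 2 / wt α n * ∑ m ∈ Ioc 0 M, wt α m * gker m n := by
  have h1 : ∑ n ∈ Ioc 0 M, ∑ m ∈ Ioc 0 M, b n * b m * gker n m ≤
      ∑ n ∈ Ioc 0 M, ∑ m ∈ Ioc 0 M, (b n ^ 2 / wt α n * (wt α m * gker m n) / 2 +
        b m ^ 2 / wt α m * (wt α n * gker n m) / 2) := by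
    refine Finset.sum_le_sum fun n hn => Finset.sum_le_sum fun m hm => ?_
    have hn' : 0 < wt α n := wt_pos α (by rw [Finset.mem_Ioc] at hn; omega)
    have hm' : 0 < wt α m := wt_pos α (by rw [Finset.mem_Ioc] at hm; omega)
    rw [gker_comm m n]
    have h2 : b n * b m ≤ (b n ^ 2 / wt α n * wt α m + b m ^ 2 / wt α m * wt α n) / 2 := by
      have : (b n ^ 2 / wt α n * wt α m + b m ^ 2 / wt α m * wt α n) / 2 - b n * b m =
        (b n * wt α m - b m * wt α n) ^ 2 / (2 * wt α n * wt α m) := by field_simp; ring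
      have h3 : 0 ≤ (b n * wt α m - b m * wt α n) ^ 2 / (2 * wt α n * wt α m) := by positivity
      linarith
    have := mul_le_mul_of_nonneg_right h2 (gker_nonneg n m)
    linarith
  refine h1.trans (le_of_eq ?_)
  simp_rw [Finset.sum_add_distrib]
  rw [Finset.sum_comm (f := fun n m => b m ^ 2 / wt α m * (wt α n * gker n m) / 2),
    ← Finset.sum_add_distrib]
  refine Finset.sum_congr rfl fun n _ => ?_
  rw [← Finset.sum_add_distrib, Finset.mul_sum]
  refine Finset.sum_congr rfl fun m _ => ?_
  ring

lemma line_bound {α : ℝ} (hα : 0 < α) : ∃ K : ℝ, 0 < K ∧ ∀ (M : ℕ) (b : ℕ → ℂ) (k : ℝ),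
    ∫⁻ t : ℝ, ENNReal.ofReal (‖∑ n ∈ Ioc 0 M, b n * cexp (-I * t * Real.log n)‖ ^ 2 *
      Real.exp (-(t - k) ^ 2 / 4)) ≤
    ENNReal.ofReal (K * ∑ n ∈ Ioc 0 M, ‖b n‖ ^ 2 / wt α n *
      (n * (1 + Real.log n) ^ ((2:ℝ) ^ α - 1))) := by
  obtain ⟨G, hG0, hG⟩ := gauss_sum
  obtain ⟨K, hK0, hK⟩ := kernel_sum hα
  refine ⟨G * K, by positivity, fun M b k => (hG _ b k).trans (ENNReal.ofReal_le_ofReal ?_)⟩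
  rw [mul_assoc]
  refine mul_le_mul_of_nonneg_left ?_ hG0.le
  refine (schur (α := α) M (fun n => ‖b n‖)).trans ?_
  rw [Finset.mul_sum]
  refine Finset.sum_le_sum fun n hn => ?_
  have hn' : 0 < n := (Finset.mem_Ioc.mp hn).1
  have := mul_le_mul_of_nonneg_left (hK n hn' M)
    (div_nonneg (sq_nonneg ‖b n‖) (wt_nonneg α n))
  refine this.trans (le_of_eq (by ring))

lemma weight_le (t : ℝ) : ENNReal.ofReal (1 / (1 + t ^ 2)) ≤
    ∑' k : ℤ, ENNReal.ofReal (4 / (1 + (k:ℝ) ^ 2)) *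
      ENNReal.ofReal (Real.exp (-(t - (k:ℝ)) ^ 2 / 4)) := by
  refine le_trans ?_ (ENNReal.le_tsum (round t))
  rw [← ENNReal.ofReal_mul (by positivity)]
  refine ENNReal.ofReal_le_ofReal ?_
  have h := abs_sub_round t
  set k : ℝ := ((round t : ℤ) : ℝ)
  obtain ⟨h1, h2⟩ := abs_le.mp h
  have h3 : (t - k) ^ 2 ≤ 1 / 4 := by nlinarith
  have h4 : 1 / 2 ≤ Real.exp (-(t - k) ^ 2 / 4) := by
    have := Real.add_one_le_exp (-(t - k) ^ 2 / 4)
    linarith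
  calc 1 / (1 + t ^ 2) ≤ 4 / (1 + k ^ 2) * (1 / 2) := by
        rw [div_mul_div_comm, div_le_div_iff₀ (by positivity) (by positivity)]
        nlinarith [sq_nonneg (t + (t - k))]
    _ ≤ _ := by gcongr

lemma line_bound' {α : ℝ} (hα : 0 < α) : ∃ K : ℝ, 0 < K ∧ ∀ (M : ℕ) (b : ℕ → ℂ),
    ∫⁻ t : ℝ, ENNReal.ofReal (‖∑ n ∈ Ioc 0 M, b n * cexp (-I * t * Real.log n)‖ ^ 2 *
      (1 / (1 + t ^ 2))) ≤
    ENNReal.ofReal (K * ∑ n ∈ Ioc 0 M, ‖b n‖ ^ 2 / wt α n *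
      (n * (1 + Real.log n) ^ ((2:ℝ) ^ α - 1))) := by
  obtain ⟨K, hK0, hK⟩ := line_bound hα
  have hsum : Summable (fun k : ℤ => 4 / (1 + (k:ℝ) ^ 2)) := by
    have h1 : Summable (fun k : ℤ => 4 * (1 / (k:ℝ) ^ 2)) :=
      (Real.summable_one_div_int_pow.mpr (by norm_num)).mul_left 4
    refine Summable.of_norm_bounded_eventually h1 ?_
    have : ∀ᶠ k : ℤ in cofinite, k ≠ 0 := (Set.finite_singleton (0:ℤ)).eventually_cofinite_notMem
    filter_upwards [this] with k hk
    have hk' : (0:ℝ) < (k:ℝ) ^ 2 := by positivity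
    rw [Real.norm_of_nonneg (by positivity), mul_one_div]
    gcongr
    linarith
  set T := ∑' k : ℤ, 4 / (1 + (k:ℝ) ^ 2) with hT
  have hT0 : 0 < T := hsum.tsum_pos (fun k => by positivity) 0 (by simp)
  refine ⟨T * K, by positivity, fun M b => ?_⟩
  set F : ℝ → ℂ := fun t => ∑ n ∈ Ioc 0 M, b n * cexp (-I * t * Real.log n) with hF
  have hFc : Continuous F := by fun_prop
  set R := ∑ n ∈ Ioc 0 M, ‖b n‖ ^ 2 / wt α n * (n * (1 + Real.log n) ^ ((2:ℝ) ^ α - 1))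
  calc ∫⁻ t : ℝ, ENNReal.ofReal (‖F t‖ ^ 2 * (1 / (1 + t ^ 2)))
      ≤ ∫⁻ t : ℝ, ∑' k : ℤ, ENNReal.ofReal (4 / (1 + (k:ℝ) ^ 2)) *
          ENNReal.ofReal (‖F t‖ ^ 2 * Real.exp (-(t - (k:ℝ)) ^ 2 / 4)) := by
        refine lintegral_mono fun t => ?_
        rw [ENNReal.ofReal_mul (by positivity)]
        refine (mul_le_mul_right (weight_le t) _).trans (le_of_eq ?_)
        rw [← ENNReal.tsum_mul_left]
        refine tsum_congr fun k => ?_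
        rw [ENNReal.ofReal_mul (p := ‖F t‖ ^ 2) (by positivity)]
        ring
    _ = ∑' k : ℤ, ENNReal.ofReal (4 / (1 + (k:ℝ) ^ 2)) *
          ∫⁻ t : ℝ, ENNReal.ofReal (‖F t‖ ^ 2 * Real.exp (-(t - (k:ℝ)) ^ 2 / 4)) := by
        have hm : ∀ k : ℤ, Measurable fun t : ℝ =>
            ENNReal.ofReal (‖F t‖ ^ 2 * Real.exp (-(t - (k:ℝ)) ^ 2 / 4)) := fun k => by
          refine ENNReal.measurable_ofReal.comp (Continuous.measurable ?_)
          fun_prop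
        rw [lintegral_tsum fun k => ((hm k).const_mul _).aemeasurable]
        refine tsum_congr fun k => ?_
        rw [lintegral_const_mul _ (hm k)]
    _ ≤ ∑' k : ℤ, ENNReal.ofReal (4 / (1 + (k:ℝ) ^ 2)) * ENNReal.ofReal (K * R) := by
        refine ENNReal.tsum_le_tsum fun k => ?_
        exact mul_le_mul_right (hK M b k) _
    _ = _ := by
        rw [ENNReal.tsum_mul_right, ← ENNReal.ofReal_tsum_of_nonneg (fun k => by positivity) hsum,
          ← ENNReal.ofReal_mul hT0.le, mul_assoc]

lemma sigma_bound {β : ℝ} (hβ : 0 < β) : ∃ C : ℝ, 0 < C ∧ ∀ n : ℕ, 0 < n →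
    ∫⁻ σ in Set.Ioi (1/2:ℝ), ENNReal.ofReal ((σ - 1/2) ^ (β - 1) * (σ + 1/2) ^ (-2 * β) *
      ((n:ℝ) ^ (1 - 2 * σ) * (1 + Real.log n) ^ β)) ≤ ENNReal.ofReal C := by
  obtain ⟨K, hK0, hK⟩ := log_rpow_le hβ 1 zero_le_one (ε := 2) (by norm_num)
  set C1 := Real.exp 2 * ((1/2) ^ β * Real.Gamma β) with hC1
  have hC10 : 0 < C1 := by have := Real.Gamma_pos_of_pos hβ; positivity
  set C2 := K * (1 / β) with hC2
  have hC20 : 0 < C2 := by positivity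
  refine ⟨C1 + C2, by positivity, fun n hn => ?_⟩
  have hn1 : (1:ℝ) ≤ n := by exact_mod_cast hn
  have hn0 : (0:ℝ) < n := by linarith
  have hl : 0 ≤ Real.log n := Real.log_nonneg hn1
  set L := 1 + Real.log n with hL
  have hL1 : 1 ≤ L := by linarith
  -- substitution
  have hsub : ∫⁻ σ in Set.Ioi (1/2:ℝ), ENNReal.ofReal ((σ - 1/2) ^ (β - 1) * (σ + 1/2) ^ (-2 * β) *
      ((n:ℝ) ^ (1 - 2 * σ) * L ^ β)) =
      ∫⁻ u in Set.Ioi (0:ℝ), ENNReal.ofReal (u ^ (β - 1) * (u + 1) ^ (-2 * β) *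
      ((n:ℝ) ^ (- 2 * u) * L ^ β)) := by
    rw [← lintegral_indicator measurableSet_Ioi, ← lintegral_indicator measurableSet_Ioi,
      ← lintegral_add_right_eq_self _ (1/2:ℝ)]
    refine lintegral_congr fun u => ?_
    by_cases hu : 0 < u
    · rw [Set.indicator_of_mem (by simpa using hu), Set.indicator_of_mem (by simpa using hu)]
      rw [show u + 1/2 - 1/2 = u by ring, show u + 1/2 + 1/2 = u + 1 by ring,
        show 1 - 2 * (u + 1/2) = -2 * u by ring]
    · rw [Set.indicator_of_notMem (by simpa using hu), Set.indicator_of_notMem (by simpa using hu)]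
  rw [hsub]
  -- pointwise bound
  have hpt : ∀ u ∈ Set.Ioi (0:ℝ), ENNReal.ofReal (u ^ (β - 1) * (u + 1) ^ (-2 * β) *
      ((n:ℝ) ^ (- 2 * u) * L ^ β)) ≤
      ENNReal.ofReal (Real.exp 2 * L ^ β * (u ^ (β - 1) * Real.exp (-((2 * L) * u)))) +
      (Set.Ioi (1:ℝ)).indicator (fun u => ENNReal.ofReal (K * u ^ (-β - 1))) u := by
    intro u hu
    have hu : 0 < u := hu
    by_cases h1 : u ≤ 1
    · refine le_trans (ENNReal.ofReal_le_ofReal ?_) le_self_add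
      have e1 : (u + 1) ^ (-2 * β) ≤ 1 := Real.rpow_le_one_of_one_le_of_nonpos (by linarith)
        (by linarith)
      have e2 : (n:ℝ) ^ (-2 * u) ≤ Real.exp 2 * Real.exp (-((2 * L) * u)) := by
        rw [Real.rpow_def_of_pos hn0, ← Real.exp_add]
        gcongr
        rw [hL]; nlinarith
      calc u ^ (β - 1) * (u + 1) ^ (-2 * β) * ((n:ℝ) ^ (- 2 * u) * L ^ β)
          ≤ u ^ (β - 1) * 1 * ((Real.exp 2 * Real.exp (-((2 * L) * u))) * L ^ β) := by gcongr
        _ = _ := by ring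
    · push Not at h1
      refine le_trans ?_ le_add_self
      rw [Set.indicator_of_mem (by simpa using h1)]
      refine ENNReal.ofReal_le_ofReal ?_
      have e1 : (u + 1) ^ (-2 * β) ≤ u ^ (-2 * β) :=
        Real.rpow_le_rpow_of_nonpos hu (by linarith) (by linarith)
      have e2 : (n:ℝ) ^ (-2 * u) ≤ (n:ℝ) ^ (-2:ℝ) :=
        Real.rpow_le_rpow_of_exponent_le hn1 (by linarith)
      have e3 : L ^ β ≤ K * (n:ℝ) ^ (2:ℝ) := by simpa using hK n hn1
      calc u ^ (β - 1) * (u + 1) ^ (-2 * β) * ((n:ℝ) ^ (- 2 * u) * L ^ β)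
          ≤ u ^ (β - 1) * u ^ (-2 * β) * ((n:ℝ) ^ (-2:ℝ) * (K * (n:ℝ) ^ (2:ℝ))) := by gcongr
        _ = K * (u ^ (β - 1) * u ^ (-2 * β)) * ((n:ℝ) ^ (-2:ℝ) * (n:ℝ) ^ (2:ℝ)) := by ring
        _ = K * u ^ (-β - 1) := by
          rw [← Real.rpow_add hu, ← Real.rpow_add hn0]
          norm_num
          left; congr 1; ring
  refine (setLIntegral_mono' measurableSet_Ioi hpt).trans ?_
  have hmeas1 : Measurable fun u : ℝ =>
      ENNReal.ofReal (Real.exp 2 * L ^ β * (u ^ (β - 1) * Real.exp (-((2 * L) * u)))) := by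
    fun_prop
  rw [lintegral_add_left hmeas1, ENNReal.ofReal_add hC10.le hC20.le]
  refine add_le_add ?_ ?_
  · have hintg : IntegrableOn (fun u : ℝ => u ^ (β - 1) * Real.exp (-((2 * L) * u)))
        (Set.Ioi 0) := by
      have := integrableOn_rpow_mul_exp_neg_mul_rpow (s := β - 1) (p := 1) (b := 2 * L)
        (by linarith) one_pos (by linarith)
      simpa [neg_mul] using this
    rw [← ofReal_integral_eq_lintegral_ofReal (hintg.const_mul _)]
    · refine ENNReal.ofReal_le_ofReal ?_
      rw [integral_const_mul, Real.integral_rpow_mul_exp_neg_mul_Ioi hβ (by linarith)]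
      rw [hC1, one_div, mul_inv, Real.mul_rpow (by positivity) (by positivity),
        Real.inv_rpow (by linarith : 0 ≤ L)]
      have : L ^ β ≠ 0 := by positivity
      refine le_of_eq ?_
      field_simp
    · rw [EventuallyLE, ae_restrict_iff' measurableSet_Ioi]
      refine ae_of_all _ fun u hu => ?_
      have hu : 0 < u := hu
      simp only [Pi.zero_apply]
      positivity
  · rw [lintegral_indicator measurableSet_Ioi, Measure.restrict_restrict measurableSet_Ioi]
    have : Set.Ioi (1:ℝ) ∩ Set.Ioi 0 = Set.Ioi 1 := by
      ext x; simp only [Set.mem_inter_iff, Set.mem_Ioi]; exact ⟨fun h => h.1, fun h => ⟨h, by linarith⟩⟩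
    rw [this]
    have hintg : IntegrableOn (fun u : ℝ => u ^ (-β - 1)) (Set.Ioi 1) :=
      integrableOn_Ioi_rpow_of_lt (by linarith) one_pos
    rw [← ofReal_integral_eq_lintegral_ofReal (hintg.const_mul _)]
    · refine ENNReal.ofReal_le_ofReal ?_
      rw [integral_const_mul, integral_Ioi_rpow_of_lt (by linarith) one_pos, hC2]
      simp
    · rw [EventuallyLE, ae_restrict_iff' measurableSet_Ioi]
      refine ae_of_all _ fun u hu => ?_
      have hu : 1 < u := hu
      simp only [Pi.zero_apply]
      positivity

lemma sum_Ioc_shift {E : Type*} [AddCommMonoid E] (g : ℕ → E) (M : ℕ) :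
    ∑ n ∈ Ioc 0 M, g n = ∑ n ∈ Finset.range M, g (n + 1) := by
  induction M with
  | zero => simp
  | succ M ih => rw [Finset.sum_Ioc_succ_top (Nat.zero_le _), Finset.sum_range_succ, ih]

lemma term_eq (a : ℕ → ℂ) {n : ℕ} (hn : 0 < n) (σ t : ℝ) :
    a n * (n : ℂ) ^ (-((σ : ℂ) + t * I)) =
      (a n * (((n:ℝ) ^ (-σ) : ℝ) : ℂ)) * cexp (-I * t * Real.log n) := by
  have hn0 : (0:ℝ) < n := by exact_mod_cast hn
  have hne : (n:ℂ) ≠ 0 := by exact_mod_cast hn.ne'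
  rw [mul_assoc]
  congr 1
  rw [Real.rpow_def_of_pos hn0, Complex.cpow_def_of_ne_zero hne, Complex.ofReal_exp,
    ← Complex.exp_add, Complex.natCast_log]
  congr 1
  push_cast
  ring

lemma weight_split {β : ℝ} (hβ : 0 < β) {σ t : ℝ} (hσ : 1/2 < σ) :
    ‖((σ : ℂ) + t * I) + 1 / 2‖ ^ (-2 * β - 2) ≤ (σ + 1/2) ^ (-2 * β) * (1 / (1 + t ^ 2)) := by
  set z : ℂ := ((σ : ℂ) + t * I) + 1 / 2 with hz
  have hre : z.re = σ + 1/2 := by simp [hz]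
  have him : z.im = t := by simp [hz]
  have h1 : σ + 1/2 ≤ ‖z‖ := by rw [← hre]; exact Complex.re_le_norm z
  have h0 : 0 < ‖z‖ := by linarith
  have h2 : 1 + t ^ 2 ≤ ‖z‖ ^ 2 := by
    rw [Complex.sq_norm, Complex.normSq_apply, hre, him]
    nlinarith
  rw [show -2 * β - 2 = -2 * β + (-(2:ℕ) : ℝ) by push_cast; ring, Real.rpow_add h0]
  have e : ‖z‖ ^ (-((2:ℕ):ℝ)) = 1 / ‖z‖ ^ 2 := by
    rw [Real.rpow_neg h0.le, Real.rpow_natCast, one_div]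
  rw [e]
  have hp : 0 ≤ (σ + 1/2) ^ (-2 * β) := Real.rpow_nonneg (by linarith) _
  exact mul_le_mul (Real.rpow_le_rpow_of_nonpos (by linarith) h1 (by linarith))
    (one_div_le_one_div_of_le (by positivity) h2) (by positivity) hp

lemma finite_bound {α : ℝ} (hα : 0 < α) {β : ℝ} (hβ : β = (2:ℝ) ^ α - 1) :
    ∃ C : ℝ, 0 < C ∧ ∀ (a : ℕ → ℂ) (M : ℕ),
    ∫⁻ s in {s : ℂ | 1 / 2 < s.re},
          ENNReal.ofReal (‖∑ n ∈ Ioc 0 M, a n * (n : ℂ) ^ (-s)‖ ^ 2 *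
            (s.re - 1 / 2) ^ (β - 1) * ‖s + 1 / 2‖ ^ (-2 * β - 2)) ≤
        ENNReal.ofReal (C * ∑ n ∈ Ioc 0 M, ‖a n‖ ^ 2 / wt α n) := by
  have hβ0 : 0 < β := by
    have := Real.one_lt_rpow (one_lt_two) hα
    linarith
  obtain ⟨K, hK0, hK⟩ := line_bound' hα
  rw [← hβ] at hK
  obtain ⟨D, hD0, hD⟩ := sigma_bound hβ0
  refine ⟨K * D, by positivity, fun a M => ?_⟩
  set g : ℂ → ENNReal := fun s => ENNReal.ofReal (‖∑ n ∈ Ioc 0 M, a n * (n : ℂ) ^ (-s)‖ ^ 2 *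
            (s.re - 1 / 2) ^ (β - 1) * ‖s + 1 / 2‖ ^ (-2 * β - 2)) with hg
  have hgm : Measurable g := by
    simp only [hg]
    fun_prop
  have hset : MeasurableSet {s : ℂ | 1 / 2 < s.re} :=
    measurableSet_lt measurable_const Complex.measurable_re
  have h1 : ∫⁻ s in {s : ℂ | 1 / 2 < s.re}, g s =
      ∫⁻ σ in Set.Ioi (1/2:ℝ), ∫⁻ t : ℝ, g ((σ : ℂ) + t * I) := by
    rw [← lintegral_indicator hset, ← lintegral_indicator measurableSet_Ioi,
      ← Complex.volume_preserving_equiv_real_prod.symm.lintegral_comp (hgm.indicator hset),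
      Measure.volume_eq_prod, lintegral_prod _ (by
        refine Measurable.aemeasurable ?_
        exact (hgm.indicator hset).comp Complex.measurableEquivRealProd.symm.measurable)]
    refine lintegral_congr fun σ => ?_
    by_cases hσ : 1/2 < σ
    · rw [Set.indicator_of_mem (by simpa using hσ)]
      refine lintegral_congr fun t => ?_
      rw [Complex.measurableEquivRealProd_symm_apply, Set.indicator_of_mem (by simpa using hσ),
        Complex.mk_eq_add_mul_I]
    · rw [Set.indicator_of_notMem (by simpa using hσ)]
      have : ∀ t : ℝ, {s : ℂ | 1 / 2 < s.re}.indicator g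
          (Complex.measurableEquivRealProd.symm (σ, t)) = 0 := fun t => by
        rw [Complex.measurableEquivRealProd_symm_apply, Set.indicator_of_notMem (by simpa using hσ)]
      simp only [this, lintegral_zero]
  rw [h1]
  have h2 : ∀ σ ∈ Set.Ioi (1/2:ℝ), ∫⁻ t : ℝ, g ((σ : ℂ) + t * I) ≤
      ∑ n ∈ Ioc 0 M, ENNReal.ofReal (K * (‖a n‖ ^ 2 / wt α n)) *
        ENNReal.ofReal ((σ - 1/2) ^ (β - 1) * (σ + 1/2) ^ (-2 * β) *
      ((n:ℝ) ^ (1 - 2 * σ) * (1 + Real.log n) ^ β)) := by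
    intro σ hσ
    have hσ : 1/2 < σ := hσ
    have hσ' : 0 < σ - 1/2 := by linarith
    set w := (σ - 1/2) ^ (β - 1) * (σ + 1/2) ^ (-2 * β) with hw
    have hw0 : 0 ≤ w := by positivity
    set b : ℕ → ℂ := fun n => a n * (((n:ℝ) ^ (-σ) : ℝ) : ℂ) with hb
    have hm : Measurable fun t : ℝ =>
        ENNReal.ofReal (‖∑ n ∈ Ioc 0 M, b n * cexp (-I * t * Real.log n)‖ ^ 2 *
          (1 / (1 + t ^ 2))) := by fun_prop
    calc ∫⁻ t : ℝ, g ((σ : ℂ) + t * I) ≤ ∫⁻ t : ℝ, ENNReal.ofReal w *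
          ENNReal.ofReal (‖∑ n ∈ Ioc 0 M, b n * cexp (-I * t * Real.log n)‖ ^ 2 *
          (1 / (1 + t ^ 2))) := by
          refine lintegral_mono fun t => ?_
          simp only [hg]
          rw [← ENNReal.ofReal_mul hw0]
          refine ENNReal.ofReal_le_ofReal ?_
          have e : ∑ n ∈ Ioc 0 M, a n * (n : ℂ) ^ (-((σ : ℂ) + t * I)) =
              ∑ n ∈ Ioc 0 M, b n * cexp (-I * t * Real.log n) :=
            Finset.sum_congr rfl fun n hn => term_eq a (Finset.mem_Ioc.mp hn).1 σ t
          have er : ((σ : ℂ) + t * I).re = σ := by simp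
          rw [e, er]
          refine (mul_le_mul_of_nonneg_left (weight_split hβ0 (t := t) hσ)
            (by positivity)).trans (le_of_eq ?_)
          rw [hw]; ring
      _ ≤ ENNReal.ofReal w * ENNReal.ofReal (K * ∑ n ∈ Ioc 0 M, ‖b n‖ ^ 2 / wt α n *
            (n * (1 + Real.log n) ^ β)) := by
          rw [lintegral_const_mul _ hm]
          exact mul_le_mul_right (hK M b) _
      _ = _ := by
          have hnn : ∀ n ∈ Ioc 0 M, 0 ≤ K * (‖a n‖ ^ 2 / wt α n) * (w *
              ((n:ℝ) ^ (1 - 2 * σ) * (1 + Real.log n) ^ β)) := fun n hn => by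
            have h1 := wt_nonneg α n
            have h2 : 0 ≤ Real.log n := Real.log_natCast_nonneg n
            positivity
          rw [← ENNReal.ofReal_mul hw0]
          have : ∀ n ∈ Ioc 0 M, ENNReal.ofReal (K * (‖a n‖ ^ 2 / wt α n)) *
            ENNReal.ofReal (w * ((n:ℝ) ^ (1 - 2 * σ) * (1 + Real.log n) ^ β)) =
            ENNReal.ofReal (K * (‖a n‖ ^ 2 / wt α n) * (w *
              ((n:ℝ) ^ (1 - 2 * σ) * (1 + Real.log n) ^ β))) := fun n hn => by
            rw [← ENNReal.ofReal_mul]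
            have h1 := wt_nonneg α n
            positivity
          rw [Finset.sum_congr rfl this, ← ENNReal.ofReal_sum_of_nonneg hnn]
          congr 1
          rw [Finset.mul_sum, Finset.mul_sum]
          refine Finset.sum_congr rfl fun n hn => ?_
          have hn0 : (0:ℝ) < n := by exact_mod_cast (Finset.mem_Ioc.mp hn).1
          have e1 : ‖b n‖ ^ 2 * n = ‖a n‖ ^ 2 * (n:ℝ) ^ (1 - 2 * σ) := by
            simp only [hb]
            rw [norm_mul, Complex.norm_real, Real.norm_of_nonneg (by positivity), mul_pow,
              ← Real.rpow_natCast ((n:ℝ) ^ (-σ)), ← Real.rpow_mul hn0.le,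
              show 1 - 2 * σ = -σ * (2:ℕ) + 1 by push_cast; ring, Real.rpow_add_one hn0.ne']
            ring
          linear_combination (w * K / wt α n * (1 + Real.log n) ^ β) * e1
  refine (setLIntegral_mono' measurableSet_Ioi h2).trans ?_
  have hms : ∀ n : ℕ, Measurable fun σ : ℝ =>
      ENNReal.ofReal ((σ - 1/2) ^ (β - 1) * (σ + 1/2) ^ (-2 * β) *
      ((n:ℝ) ^ (1 - 2 * σ) * (1 + Real.log n) ^ β)) := fun n => by fun_prop
  rw [lintegral_finsetSum _ (fun n _ => (hms n).const_mul _)]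
  have hc : ∀ n, 0 ≤ K * (‖a n‖ ^ 2 / wt α n) := fun n => by
    have h1 := wt_nonneg α n
    positivity
  calc _ ≤ ∑ n ∈ Ioc 0 M, ENNReal.ofReal (K * (‖a n‖ ^ 2 / wt α n)) * ENNReal.ofReal D := by
        refine Finset.sum_le_sum fun n hn => ?_
        rw [lintegral_const_mul _ (hms n)]
        exact mul_le_mul_right (hD n (Finset.mem_Ioc.mp hn).1) _
    _ = _ := by
        rw [← Finset.sum_mul, ← ENNReal.ofReal_sum_of_nonneg (fun n _ => hc n),
          ← ENNReal.ofReal_mul (Finset.sum_nonneg fun n _ => hc n), ← Finset.mul_sum]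
        congr 1; ring

/-- `𝒟_α` embeds continuously into the Bergman-type space
`D_{β,i}(ℂ_{1/2})` with `β = 2^α - 1`. -/
theorem statement12 (α : ℝ) (hα : 0 < α) (β : ℝ) (hβ : β = (2 : ℝ) ^ α - 1) :
    ∃ C > 0, ∀ a : ℕ → ℂ,
      Summable (fun n : ℕ => ‖a (n + 1)‖ ^ 2 / (numDiv (n + 1) : ℝ) ^ α) →
      ∫⁻ s in {s : ℂ | 1 / 2 < s.re},
          ENNReal.ofReal (‖∑' n : ℕ, a (n + 1) * ((n + 1 : ℕ) : ℂ) ^ (-s)‖ ^ 2 *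
            (s.re - 1 / 2) ^ (β - 1) * ‖s + 1 / 2‖ ^ (-2 * β - 2)) ≤
        ENNReal.ofReal (C * ∑' n : ℕ, ‖a (n + 1)‖ ^ 2 / (numDiv (n + 1) : ℝ) ^ α) := by
  obtain ⟨C, hC0, hC⟩ := finite_bound hα hβ
  refine ⟨C, hC0, fun a ha => ?_⟩
  set g : ℕ → ℂ → ENNReal := fun M s =>
    ENNReal.ofReal (‖∑ n ∈ Ioc 0 M, a n * (n : ℂ) ^ (-s)‖ ^ 2 *
            (s.re - 1 / 2) ^ (β - 1) * ‖s + 1 / 2‖ ^ (-2 * β - 2)) with hg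
  have hgm : ∀ M, Measurable (g M) := fun M => by
    simp only [hg]
    fun_prop
  have hpt : ∀ s : ℂ, ENNReal.ofReal (‖∑' n : ℕ, a (n + 1) * ((n + 1 : ℕ) : ℂ) ^ (-s)‖ ^ 2 *
            (s.re - 1 / 2) ^ (β - 1) * ‖s + 1 / 2‖ ^ (-2 * β - 2)) ≤
      liminf (fun M => g M s) atTop := by
    intro s
    by_cases hs : Summable (fun n : ℕ => a (n + 1) * ((n + 1 : ℕ) : ℂ) ^ (-s))
    · have ht := hs.hasSum.tendsto_sum_nat
      have ht2 : Tendsto (fun M => g M s) atTop (nhds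
          (ENNReal.ofReal (‖∑' n : ℕ, a (n + 1) * ((n + 1 : ℕ) : ℂ) ^ (-s)‖ ^ 2 *
            (s.re - 1 / 2) ^ (β - 1) * ‖s + 1 / 2‖ ^ (-2 * β - 2)))) := by
        simp only [hg]
        refine ENNReal.tendsto_ofReal ?_
        refine Tendsto.mul_const _ (Tendsto.mul_const _ ?_)
        refine (Tendsto.norm ?_).pow 2
        simp_rw [sum_Ioc_shift (fun n : ℕ => a n * (n : ℂ) ^ (-s))]
        exact ht
      rw [ht2.liminf_eq]
    · rw [tsum_eq_zero_of_not_summable hs]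
      simp
  refine (lintegral_mono hpt).trans ?_
  refine (lintegral_liminf_le hgm).trans ?_
  refine liminf_le_of_le (by isBoundedDefault) ?_
  intro x hx
  obtain ⟨M, hM⟩ := hx.exists
  refine hM.trans ((hC a M).trans (ENNReal.ofReal_le_ofReal ?_))
  refine mul_le_mul_of_nonneg_left ?_ hC0.le
  rw [sum_Ioc_shift (fun n : ℕ => ‖a n‖ ^ 2 / wt α n)]
  exact ha.sum_le_tsum _ (fun n _ => div_nonneg (sq_nonneg _) (Real.rpow_nonneg (Nat.cast_nonneg _) _))
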